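/- arXiv:2007.14088 — 2 statements merged into one kernel-verified Lean document; each statement's English description precedes it below -/
import Mathlib

section
/- Let F be a finite field of characteristic p > 2 with q = p^n elements, and let G = C_8 × C_4. Then the unit group U(FG) is isomorphic to: C_{p^n-1}^{32} if q ≡ 1 (mod 8); C_{p^n-1}^4 × C_{p^{2n}-1}^{14} if q ≡ -1 (mod 8); C_{p^n-1}^4 × C_{p^{2n}-1}^{14} if q ≡ 3 (mod 8); C_{p^n-1}^{16} × C_{p^{2n}-1}^8 if q ≡ -3 (mod 8). -/
/-- The cyclic group of order `m`, realized as `Multiplicative (ZMod m)`. -/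
abbrev C (m : ℕ) : Type := Multiplicative (ZMod m)

/-!
On `A = F[G]` the map `x ↦ x ^ q` is the `F`-algebra endomorphism `g ↦ g ^ q`. If
`g ^ (q ^ ℓ) = g` on `G` with `ℓ` prime, then `x ^ (q ^ ℓ) = x` on `A`. Hence `A` is reduced, so it
is the product of its residue fields, each of which has degree `1` or `ℓ` over `F`. The maximal
ideals of degree `1` are the kernels of the `F`-algebra maps `A → F`, i.e. of the characters
`G → F`; for cyclic factors of `G` these are counted by roots of unity in `F`, and the number of
factors of degree `ℓ` is then forced by `dim A = |G|`.
-/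

open Module FiniteField

section FiniteFields

variable {F K L : Type*} [Field F] [Field K] [Field L] [Algebra F K] [Algebra F L]

theorem frobeniusAlgHom_pow_apply [Fintype F] {A : Type*} [CommRing A] [Algebra F A] (m : ℕ)
    (x : A) : (frobeniusAlgHom F A ^ m) x = x ^ Fintype.card F ^ m := by
  rw [AlgHom.coe_pow, coe_frobeniusAlgHom, pow_iterate]

theorem finrank_dvd_of_forall_pow_card_pow_eq_self [Fintype F] [Finite L] {m : ℕ}
    (hL : ∀ x : L, x ^ Fintype.card F ^ m = x) : finrank F L ∣ m := by
  rw [← orderOf_frobeniusAlgHom F L]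
  exact orderOf_dvd_of_pow_eq_one <|
    AlgHom.ext fun x => (frobeniusAlgHom_pow_apply m x).trans (hL x)

theorem nonempty_algEquiv_of_finrank_eq [Finite K] [Finite L] (h : finrank F K = finrank F L) :
    Nonempty (K ≃ₐ[F] L) := by
  obtain ⟨f⟩ := nonempty_algHom_of_finrank_dvd h.dvd
  have hsurj := (LinearMap.injective_iff_surjective_of_finrank_eq_finrank (f := f.toLinearMap) h).1
  exact ⟨.ofBijective f ⟨f.injective, hsurj f.injective⟩⟩

theorem nonempty_units_mulEquiv_C (K : Type*) [Field K] [Finite K] :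
    Nonempty (Kˣ ≃* C (Nat.card K - 1)) := by
  rw [← Nat.card_units]
  exact ⟨(zmodCyclicMulEquiv inferInstance).symm⟩

end FiniteFields

section MaximalIdeals

theorem isReduced_of_forall_pow_eq_self {A : Type*} [MonoidWithZero A] {k : ℕ} (hk : 1 < k)
    (hA : ∀ x : A, x ^ k = x) : IsReduced A :=
  (isReduced_iff_pow_one_lt k hk).2 fun x hx => hA x ▸ hx

theorem algHom_eq_of_ker_eq {R A : Type*} [CommRing R] [Ring A] [Algebra R A] {f g : A →ₐ[R] R}
    (h : RingHom.ker f = RingHom.ker g) : f = g := by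
  ext x
  have hx : x - algebraMap R A (f x) ∈ RingHom.ker g := by
    rw [← h, RingHom.mem_ker, map_sub, f.commutes, Algebra.algebraMap_self_apply, sub_self]
  rw [RingHom.mem_ker, map_sub, g.commutes, Algebra.algebraMap_self_apply, sub_eq_zero] at hx
  exact hx.symm

theorem natCard_maximalSpectrum_finrank_eq_one (F A : Type*) [Field F] [CommRing A] [Algebra F A] :
    Nat.card {I : MaximalSpectrum A // finrank F (A ⧸ I.asIdeal) = 1} = Nat.card (A →ₐ[F] F) := by
  have hsurj (f : A →ₐ[F] F) : Function.Surjective f := fun c => ⟨algebraMap F A c, f.commutes c⟩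
  let ker (f : A →ₐ[F] F) : {I : MaximalSpectrum A // finrank F (A ⧸ I.asIdeal) = 1} :=
    ⟨⟨RingHom.ker f, RingHom.ker_isMaximal_of_surjective f (hsurj f)⟩,
      (Ideal.quotientKerAlgEquivOfSurjective (hsurj f)).toLinearEquiv.finrank_eq.trans
        (finrank_self F)⟩
  have ker_injective : Function.Injective ker := fun f g h =>
    algHom_eq_of_ker_eq (congrArg (·.1.asIdeal) h)
  have ker_surjective : Function.Surjective ker := fun ⟨I, hI⟩ => by
    let e : F ≃ₐ[F] A ⧸ I.asIdeal :=
      .ofBijective (Algebra.ofId F _) (Algebra.finrank_eq_one_iff_bijective_algebraMap.1 hI)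
    let f : A →ₐ[F] F := (e.symm : A ⧸ I.asIdeal →ₐ[F] F).comp (Ideal.Quotient.mkₐ F I.asIdeal)
    have hf : RingHom.ker f = I.asIdeal := by
      ext x
      simp [f, RingHom.mem_ker, Ideal.Quotient.eq_zero_iff_mem]
    exact ⟨f, Subtype.ext (MaximalSpectrum.ext hf)⟩
  exact (Nat.card_congr (.ofBijective ker ⟨ker_injective, ker_surjective⟩)).symm

end MaximalIdeals

section ProductDecomposition

theorem nonempty_pi_algEquiv_prod {R ι K₁ K₂ : Type*} {L : ι → Type*} [Finite ι] [CommSemiring R]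
    [∀ i, Semiring (L i)] [∀ i, Algebra R (L i)] [Semiring K₁] [Algebra R K₁] [Semiring K₂]
    [Algebra R K₂] {P : ι → Prop} (h₁ : ∀ i, P i → Nonempty (L i ≃ₐ[R] K₁))
    (h₂ : ∀ i, ¬P i → Nonempty (L i ≃ₐ[R] K₂)) :
    Nonempty ((∀ i, L i) ≃ₐ[R]
      (Fin (Nat.card {i // P i}) → K₁) × (Fin (Nat.card {i // ¬P i}) → K₂)) := by
  classical
  let split : (∀ i, L i) ≃ₐ[R] (∀ i : {i // P i}, L i) × (∀ i : {i // ¬P i}, L i) :=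
    .ofRingEquiv (f := .piEquivPiSubtypeProd P L) fun _ => rfl
  exact ⟨split.trans <| .prodCongr
    ((AlgEquiv.piCongrRight fun i : {i // P i} => (h₁ i i.2).some).trans <|
      .piCongrLeft R (fun _ => K₁) (Finite.equivFin _))
    ((AlgEquiv.piCongrRight fun i : {i // ¬P i} => (h₂ i i.2).some).trans <|
      .piCongrLeft R (fun _ => K₂) (Finite.equivFin _))⟩

variable {F A : Type*} (K : Type*) [Field F] [Fintype F] [CommRing A] [Algebra F A]
  [Module.Finite F A] [Field K] [Algebra F K]

theorem exists_algEquiv_prod_of_forall_pow_eq_self (hK : (finrank F K).Prime)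
    (hA : ∀ x : A, x ^ Fintype.card F ^ finrank F K = x) :
    ∃ b, Nonempty (A ≃ₐ[F] (Fin (Nat.card (A →ₐ[F] F)) → F) × (Fin b → K)) := by
  have : IsReduced A :=
    isReduced_of_forall_pow_eq_self (Nat.one_lt_pow hK.ne_zero Fintype.one_lt_card) hA
  have : IsArtinianRing A := .of_finite F A
  have : Module.Finite F K := finite_of_finrank_pos hK.pos
  have : Finite K := finite_of_finite F
  have (I : MaximalSpectrum A) : Finite (A ⧸ I.asIdeal) := finite_of_finite F
  let (I : MaximalSpectrum A) : Field (A ⧸ I.asIdeal) := Ideal.Quotient.field _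
  have hdvd (I : MaximalSpectrum A) : finrank F (A ⧸ I.asIdeal) ∣ finrank F K :=
    finrank_dvd_of_forall_pow_card_pow_eq_self <| Ideal.Quotient.mk_surjective.forall.2 fun x => by
      rw [← map_pow, hA]
  obtain ⟨e⟩ := nonempty_pi_algEquiv_prod (R := F) (K₁ := F) (K₂ := K)
    (L := fun I : MaximalSpectrum A => A ⧸ I.asIdeal) (P := fun I => finrank F (A ⧸ I.asIdeal) = 1)
    (fun I h => nonempty_algEquiv_of_finrank_eq (h.trans (finrank_self F).symm))
    (fun I h => nonempty_algEquiv_of_finrank_eq (((Nat.dvd_prime hK).1 (hdvd I)).resolve_left h))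
  rw [natCard_maximalSpectrum_finrank_eq_one] at e
  exact ⟨_, ⟨((IsArtinianRing.equivPi A).restrictScalars F).trans e⟩⟩

theorem nonempty_algEquiv_prod_of_forall_pow_eq_self (hK : (finrank F K).Prime)
    (hA : ∀ x : A, x ^ Fintype.card F ^ finrank F K = x) {a b : ℕ}
    (ha : Nat.card (A →ₐ[F] F) = a) (hb : a + finrank F K * b = finrank F A) :
    Nonempty (A ≃ₐ[F] (Fin a → F) × (Fin b → K)) := by
  obtain ⟨b', ⟨e⟩⟩ := exists_algEquiv_prod_of_forall_pow_eq_self K hK hA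
  rw [ha] at e
  have : Module.Finite F K := finite_of_finrank_pos hK.pos
  have hb' : finrank F A = a + finrank F K * b' := by
    simp [e.toLinearEquiv.finrank_eq, finrank_prod, finrank_pi_fintype, mul_comm]
  obtain rfl : b = b' := Nat.eq_of_mul_eq_mul_left hK.pos (Nat.add_left_cancel (hb.trans hb'))
  exact ⟨e⟩

end ProductDecomposition

section Characters

theorem natCard_monoidHom_prod (M N P : Type*) [MulOneClass M] [MulOneClass N] [CommMonoid P] :
    Nat.card (M × N →* P) = Nat.card (M →* P) * Nat.card (N →* P) := by
  rw [← Nat.card_prod]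
  exact Nat.card_congr
    { toFun f := (f.comp (.inl M N), f.comp (.inr M N))
      invFun f := f.1.coprod f.2
      left_inv f := f.coprod_unique
      right_inv f := by simp only [MonoidHom.coprod_comp_inl, MonoidHom.coprod_comp_inr] }

theorem natCard_monoidHom_of_isCyclic (G F : Type*) [CommGroup G] [IsCyclic G] [Field F]
    [Finite F] : Nat.card (G →* F) = (Nat.card F - 1).gcd (Nat.card G) := by
  obtain ⟨e⟩ := IsCyclic.monoidHom_mulEquiv_rootsOfUnity G Fˣ
  calc Nat.card (G →* F)
    _ = Nat.card (rootsOfUnity (Nat.card G) F) :=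
      Nat.card_congr <| (MonoidHom.toHomUnitsMulEquiv.trans e).trans
        (rootsOfUnityUnitsMulEquiv F _) |>.toEquiv
    _ = (Nat.card Fˣ).gcd (Nat.card G) := IsCyclic.card_powMonoidHom_ker Fˣ _
    _ = (Nat.card F - 1).gcd (Nat.card G) := by rw [Nat.card_units]

end Characters

section UnitGroups

variable {F : Type*} [Field F] [Fintype F]

theorem pow_card_pow_eq_self_monoidAlgebra {G : Type*} [CommMonoid G] {m : ℕ}
    (hG : ∀ g : G, g ^ Fintype.card F ^ m = g) (x : MonoidAlgebra F G) :
    x ^ Fintype.card F ^ m = x := by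
  have hfrob : frobeniusAlgHom F (MonoidAlgebra F G) ^ m = 1 := by
    ext g
    simp [frobeniusAlgHom_pow_apply, MonoidAlgebra.single_pow, hG]
  rw [← frobeniusAlgHom_pow_apply, hfrob, AlgHom.one_apply]

theorem nonempty_units_monoidAlgebra_mulEquiv {G : Type*} [CommMonoid G] [Finite G] {ℓ a b : ℕ}
    (hℓ : ℓ.Prime) (hG : ∀ g : G, g ^ Fintype.card F ^ ℓ = g) (ha : Nat.card (G →* F) = a)
    (hb : a + ℓ * b = Nat.card G) :
    Nonempty ((MonoidAlgebra F G)ˣ ≃*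
      (Fin a → C (Fintype.card F - 1)) × (Fin b → C (Fintype.card F ^ ℓ - 1))) := by
  obtain ⟨p, _, _, hp, _⟩ := card' F
  have := Fact.mk hp
  have : NeZero ℓ := ⟨hℓ.ne_zero⟩
  let K := Extension F p ℓ
  have hK : finrank F K = ℓ := finrank_extension F p ℓ
  have hrank : finrank F (MonoidAlgebra F G) = Nat.card G :=
    finrank_eq_nat_card_basis (MonoidAlgebra.basis G F)
  rw [Nat.card_congr (MonoidAlgebra.lift F F G)] at ha
  obtain ⟨e⟩ := nonempty_algEquiv_prod_of_forall_pow_eq_self K (hK.symm ▸ hℓ)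
    (hK.symm ▸ pow_card_pow_eq_self_monoidAlgebra hG) ha (by rw [hK, hrank, hb])
  obtain ⟨eF⟩ := nonempty_units_mulEquiv_C F
  obtain ⟨eK⟩ := nonempty_units_mulEquiv_C K
  rw [natCard_extension] at eK
  rw [← Nat.card_eq_fintype_card]
  exact ⟨(Units.mapEquiv e.toMulEquiv).trans <| MulEquiv.prodUnits.trans <| .prodCongr
    (MulEquiv.piUnits.trans <| .piCongrRight fun _ => eF)
    (MulEquiv.piUnits.trans <| .piCongrRight fun _ => eK)⟩

theorem nonempty_units_monoidAlgebra_C_prod_C_mulEquiv {m k ℓ a b : ℕ} [NeZero m] (hkm : k ∣ m)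
    (hℓ : ℓ.Prime) {r : ZMod m} (hr : (Fintype.card F : ZMod m) = r) (hrℓ : r ^ ℓ = 1)
    (ha : (r - 1).val.gcd m * (r - 1).val.gcd k = a) (hb : a + ℓ * b = m * k) :
    Nonempty ((MonoidAlgebra F (C m × C k))ˣ ≃*
      (Fin a → C (Fintype.card F - 1)) × (Fin b → C (Fintype.card F ^ ℓ - 1))) := by
  have : NeZero k := ⟨ne_zero_of_dvd_ne_zero (NeZero.ne m) hkm⟩
  have hcard : Nat.card (C m × C k) = m * k := by simp
  have hone : Fintype.card F ^ ℓ ≡ 1 [MOD m] := by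
    rw [← ZMod.natCast_eq_natCast_iff, Nat.cast_pow, hr, hrℓ, Nat.cast_one]
  have hC (j : ℕ) (c : C j) : c ^ j = 1 := by
    rw [← toAdd_eq_zero, toAdd_pow, nsmul_eq_mul, CharP.cast_eq_zero, zero_mul]
  have hexp (g : C m × C k) : g ^ Fintype.card F ^ ℓ = g :=
    Prod.ext ((pow_eq_pow_of_modEq hone (hC m g.1)).trans (pow_one _))
      ((pow_eq_pow_of_modEq (hone.of_dvd hkm) (hC k g.2)).trans (pow_one _))
  have hmod : Fintype.card F - 1 ≡ (r - 1).val [MOD m] := by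
    rw [← ZMod.natCast_eq_natCast_iff, ZMod.natCast_zmod_val, Nat.cast_pred Fintype.card_pos, hr]
  refine nonempty_units_monoidAlgebra_mulEquiv hℓ hexp ?_ (hb.trans hcard.symm)
  rw [natCard_monoidHom_prod, natCard_monoidHom_of_isCyclic, natCard_monoidHom_of_isCyclic,
    Nat.card_eq_fintype_card (α := F), ← ha]
  simp [hmod.gcd_eq, (hmod.of_dvd hkm).gcd_eq]

end UnitGroups

theorem unit_group_stmt_5 (F : Type*) [Field F] [Fintype F] (p n : ℕ)
    (hp : p.Prime) (hp2 : 2 < p) [CharP F p] (hn : 0 < n)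
    (hF : Fintype.card F = p ^ n) :
    (((p ^ n : ZMod 8) = 1) →
      Nonempty ((MonoidAlgebra F (C 8 × C 4))ˣ ≃* ((Fin (32) → C (p ^ n - 1))))) ∧
    (((p ^ n : ZMod 8) = -1) →
      Nonempty ((MonoidAlgebra F (C 8 × C 4))ˣ ≃* ((Fin (4) → C (p ^ n - 1)) × (Fin (14) → C (p ^ (2 * n) - 1))))) ∧
    (((p ^ n : ZMod 8) = 3) →
      Nonempty ((MonoidAlgebra F (C 8 × C 4))ˣ ≃* ((Fin (4) → C (p ^ n - 1)) × (Fin (14) → C (p ^ (2 * n) - 1))))) ∧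
    (((p ^ n : ZMod 8) = -3) →
      Nonempty ((MonoidAlgebra F (C 8 × C 4))ˣ ≃* ((Fin (16) → C (p ^ n - 1)) × (Fin (8) → C (p ^ (2 * n) - 1))))) := by
  have hq : (Fintype.card F : ZMod 8) = p ^ n := by rw [hF, Nat.cast_pow]
  have h48 : 4 ∣ 8 := by norm_num
  rw [pow_mul', ← hF]
  refine ⟨fun h => ?_, fun h => ?_, fun h => ?_, fun h => ?_⟩
  · obtain ⟨e⟩ := nonempty_units_monoidAlgebra_C_prod_C_mulEquiv (a := 32) (b := 0) h48
      Nat.prime_two (hq.trans h) (by decide) (by decide) rfl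
    exact ⟨e.trans .prodUnique⟩
  · exact nonempty_units_monoidAlgebra_C_prod_C_mulEquiv h48 Nat.prime_two (hq.trans h)
      (by decide) (by decide) rfl
  · exact nonempty_units_monoidAlgebra_C_prod_C_mulEquiv h48 Nat.prime_two (hq.trans h)
      (by decide) (by decide) rfl
  · exact nonempty_units_monoidAlgebra_C_prod_C_mulEquiv h48 Nat.prime_two (hq.trans h)
      (by decide) (by decide) rfl
end

section
/- Let F be a finite field of characteristic 2 with q = 2^n elements, and let G = C_8 × C_2 × C_2. Then the unit group of the group algebra FG is isomorphic to C_8^n × C_4^n × C_2^{26n} × C_{2^n - 1}. -/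
/-!
The augmentation splits the unit group of `F[G]` as `V × Fˣ`, where `V` is the group of units of
augmentation `1` and `Fˣ` is cyclic. For a finite abelian `p`-group `G` in characteristic `p`, `V`
is again a finite abelian `p`-group, hence determined by the numbers of solutions of
`v ^ p ^ j = 1`. Raising to the power `p ^ j` is, up to an injective Frobenius on coefficients, the
ring map `F[G] → F[G ^ p ^ j]` induced by `g ↦ g ^ p ^ j`, so this equation has as many solutions
as that map has kernel elements, namely `|F| ^ (|G| - |G ^ p ^ j|)`.
-/

open Finset
open scoped MonoidAlgebra

section TorsionCard

/-- The number of solutions of `a ^ k = 1` in a commutative group `A` (with the junk value `0` if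
there are infinitely many). -/
noncomputable def torsionCard (A : Type*) [CommGroup A] (k : ℕ) : ℕ :=
  Nat.card (powMonoidHom k : A →* A).ker

variable {A B : Type*} [CommGroup A] [CommGroup B]

lemma torsionCard_congr (e : A ≃* B) (k : ℕ) : torsionCard A k = torsionCard B k :=
  Nat.card_congr <| e.toEquiv.subtypeEquiv fun a => by
    simp [MonoidHom.mem_ker, ← map_pow]

lemma torsionCard_prod (k : ℕ) : torsionCard (A × B) k = torsionCard A k * torsionCard B k := by
  have ker_eq : (powMonoidHom k : A × B →* A × B).ker =
      (powMonoidHom k : A →* A).ker.prod (powMonoidHom k : B →* B).ker := by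
    ext ⟨a, b⟩
    simp [MonoidHom.mem_ker, Subgroup.mem_prod]
  rw [torsionCard, ker_eq, Nat.card_congr (Subgroup.prodEquiv _ _).toEquiv, Nat.card_prod]
  rfl

lemma torsionCard_pi {ι : Type*} [Fintype ι] (D : ι → Type*) [∀ i, CommGroup (D i)] (k : ℕ) :
    torsionCard (∀ i, D i) k = ∏ i, torsionCard (D i) k := by
  unfold torsionCard
  rw [← Nat.card_pi]
  exact Nat.card_congr <|
    ((Equiv.refl _).subtypeEquiv fun f => by simp [MonoidHom.mem_ker, funext_iff]).trans
      (Equiv.subtypePiEquivPi (p := fun i a => a ∈ (powMonoidHom k : D i →* D i).ker))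

lemma torsionCard_cyclic (m : ℕ) [NeZero m] (k : ℕ) : torsionCard (C m) k = m.gcd k := by
  rw [torsionCard, IsCyclic.card_powMonoidHom_ker, Nat.card_eq_fintype_card]
  simp [ZMod.card]

lemma card_range_powMonoidHom [Finite A] (k : ℕ) :
    Nat.card (powMonoidHom k : A →* A).range = Nat.card A / torsionCard A k := by
  rw [← Subgroup.index_ker, ← Subgroup.card_mul_index (powMonoidHom k : A →* A).ker, torsionCard,
    Nat.mul_div_cancel_left _ Nat.card_pos]

end TorsionCard

section Classification

lemma sum_min_succ {ι : Type*} [Fintype ι] (e : ι → ℕ) (j : ℕ) :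
    ∑ i, min (e i) (j + 1) = ∑ i, min (e i) j + #{i | j < e i} := by
  rw [card_filter, ← sum_add_distrib]
  refine sum_congr rfl fun i _ => ?_
  split_ifs <;> omega

lemma card_lt_eq_card_eq_add_card_succ_lt {ι : Type*} [Fintype ι] (e : ι → ℕ) (j : ℕ) :
    #{i | j < e i} = #{i | e i = j + 1} + #{i | j + 1 < e i} := by
  simp only [card_filter, ← sum_add_distrib]
  refine sum_congr rfl fun i _ => ?_
  split_ifs <;> omega

lemma exists_equiv_of_sum_min_eq {ι κ : Type*} [Fintype ι] [Fintype κ] {e : ι → ℕ} {f : κ → ℕ}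
    (he : ∀ i, 0 < e i) (hf : ∀ k, 0 < f k)
    (h : ∀ j, ∑ i, min (e i) j = ∑ k, min (f k) j) : ∃ σ : ι ≃ κ, ∀ i, f (σ i) = e i := by
  have card_lt (j : ℕ) : #{i | j < e i} = #{k | j < f k} := by
    have := h (j + 1)
    rwa [sum_min_succ, sum_min_succ, h j, Nat.add_left_cancel_iff] at this
  have card_fiber (m : ℕ) : Fintype.card {i // e i = m} = Fintype.card {k // f k = m} := by
    simp only [Fintype.card_subtype]
    cases m with
    | zero => simp [(he _).ne', (hf _).ne']
    | succ j =>
      have he' := card_lt_eq_card_eq_add_card_succ_lt e j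
      have hf' := card_lt_eq_card_eq_add_card_succ_lt f j
      rw [card_lt, card_lt] at he'
      omega
  exact ⟨Equiv.ofFiberEquiv fun m => Fintype.equivOfCardEq (card_fiber m),
    Equiv.ofFiberEquiv_map _⟩

lemma torsionCard_pi_cyclic_pow {ι : Type*} [Fintype ι] (p : ℕ) [NeZero p] (e : ι → ℕ) (j : ℕ) :
    torsionCard (∀ i, C (p ^ e i)) (p ^ j) = p ^ ∑ i, min (e i) j := by
  have gcd_pow_pow (a : ℕ) : (p ^ a).gcd (p ^ j) = p ^ min a j := by
    rcases le_total a j with h | h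
    · rw [min_eq_left h, Nat.gcd_eq_left (pow_dvd_pow p h)]
    · rw [min_eq_right h, Nat.gcd_eq_right (pow_dvd_pow p h)]
  simp only [torsionCard_pi, torsionCard_cyclic, gcd_pow_pow, prod_pow_eq_pow_sum]

variable {p : ℕ} [Fact p.Prime]

lemma exists_mulEquiv_pi_cyclic_of_isPGroup {A : Type*} [CommGroup A] [Finite A]
    (hA : IsPGroup p A) :
    ∃ (ι : Type) (_ : Fintype ι) (e : ι → ℕ),
      (∀ i, 0 < e i) ∧ Nonempty (A ≃* ∀ i, C (p ^ e i)) := by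
  obtain ⟨ι, _, m, hm, ⟨φ⟩⟩ := CommGroup.equiv_prod_multiplicative_zmod_of_finite A
  have prime_pow (i : ι) : ∃ e, m i = p ^ e := by
    have : NeZero (m i) := ⟨(hm i).ne_bot⟩
    have hC : IsPGroup p (C (m i)) := hA.of_surjective
      ((Pi.evalMonoidHom _ i).comp φ.toMonoidHom)
      ((Function.surjective_eval i).comp φ.surjective)
    simpa [Nat.card_eq_fintype_card, ZMod.card] using IsPGroup.iff_card.mp hC
  choose e he using prime_pow
  obtain rfl : m = fun i => p ^ e i := funext he
  exact ⟨ι, inferInstance, e, fun i => Nat.pos_of_ne_zero fun h => by simpa [h] using hm i, ⟨φ⟩⟩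

theorem nonempty_mulEquiv_of_torsionCard_eq {A B : Type*} [CommGroup A] [CommGroup B]
    [Finite A] [Finite B] (hA : IsPGroup p A) (hB : IsPGroup p B)
    (h : ∀ j, torsionCard A (p ^ j) = torsionCard B (p ^ j)) : Nonempty (A ≃* B) := by
  obtain ⟨ι, _, e, he, ⟨φ⟩⟩ := exists_mulEquiv_pi_cyclic_of_isPGroup hA
  obtain ⟨κ, _, f, hf, ⟨ψ⟩⟩ := exists_mulEquiv_pi_cyclic_of_isPGroup hB
  obtain ⟨σ, hσ⟩ := exists_equiv_of_sum_min_eq he hf fun j =>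
    Nat.pow_right_injective (Fact.out : p.Prime).two_le <| by
      simpa only [torsionCard_congr φ, torsionCard_congr ψ, torsionCard_pi_cyclic_pow]
        using h j
  obtain rfl : e = fun i => f (σ i) := funext fun i => (hσ i).symm
  let reindex : (∀ k, C (p ^ f k)) ≃* ∀ i, C (p ^ f (σ i)) :=
    { (Equiv.piCongrLeft (fun k => C (p ^ f k)) σ).symm with map_mul' := fun _ _ => rfl }
  exact ⟨φ.trans (reindex.symm.trans ψ.symm)⟩

end Classification

section Augmentation

/-- A commutative group with a retraction `f` onto `B` (with section `s`) is the direct product of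
`ker f` and `B`. -/
def kerProdEquivOfRightInverse {A B : Type*} [CommGroup A] [Group B] (f : A →* B) (s : B →* A)
    (h : Function.RightInverse s f) : A ≃* f.ker × B where
  toFun a := (⟨a / s (f a), by simp [MonoidHom.mem_ker, h (f a)]⟩, f a)
  invFun x := x.1 * s x.2
  left_inv a := by simp
  right_inv x := by
    have hx : f x.1 = 1 := x.1.2
    ext <;> simp [hx, h x.2]
  map_mul' a b := by ext <;> simp [mul_div_mul_comm]

/-- The augmentation `R[M] → R`, sending an element to the sum of its coefficients. -/
noncomputable def augmentation (R M : Type*) [CommSemiring R] [Monoid M] : R[M] →ₐ[R] R :=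
  MonoidAlgebra.lift R R M 1

/-- The group of normalized units of `R[M]`: the units of augmentation `1`. -/
noncomputable def normalizedUnits (R M : Type*) [CommSemiring R] [Monoid M] : Subgroup R[M]ˣ :=
  (Units.map (augmentation R M : R[M] →* R)).ker

lemma mem_normalizedUnits {R M : Type*} [CommSemiring R] [Monoid M] {u : R[M]ˣ} :
    u ∈ normalizedUnits R M ↔ augmentation R M u = 1 := by
  simp [normalizedUnits, MonoidHom.mem_ker, Units.ext_iff]

/-- Every unit of `R[M]` is uniquely a normalized unit times a unit of `R`. -/
noncomputable def unitsEquivNormalizedUnitsProd (R M : Type*) [CommSemiring R] [CommMonoid M] :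
    R[M]ˣ ≃* normalizedUnits R M × Rˣ :=
  kerProdEquivOfRightInverse _ (Units.map (algebraMap R R[M]).toMonoidHom) fun u =>
    Units.ext <| (augmentation R M).commutes u

lemma mapDomainRingHom_one {R M : Type*} [CommSemiring R] [Monoid M] (a : R[M]) :
    MonoidAlgebra.mapDomainRingHom R (1 : M →* M) a = algebraMap R R[M] (augmentation R M a) := by
  suffices MonoidAlgebra.mapDomainRingHom R (1 : M →* M) =
      (algebraMap R R[M]).comp (augmentation R M) from congr($this a)
  ext x <;> simp [augmentation]

end Augmentation

section Cardinality

lemma natCard_monoidAlgebra (R M : Type*) [Semiring R] [Finite M] :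
    Nat.card R[M] = Nat.card R ^ Nat.card M := by
  have := Fintype.ofFinite M
  rw [Nat.card_congr (MonoidAlgebra.coeffEquiv.trans Finsupp.equivFunOnFinite), Nat.card_fun]

instance finite_monoidAlgebra {R M : Type*} [Semiring R] [Finite R] [Finite M] : Finite R[M] :=
  .of_equiv _ (MonoidAlgebra.coeffEquiv.trans Finsupp.equivFunOnFinite).symm

lemma mapDomainRingHom_surjective {R M N : Type*} [Semiring R] [Monoid M] [Monoid N] {f : M →* N}
    (hf : Function.Surjective f) : Function.Surjective (MonoidAlgebra.mapDomainRingHom R f) := by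
  intro b
  obtain ⟨a, ha⟩ := Finsupp.mapDomain_surjective hf b.coeff
  exact ⟨.ofCoeff a, MonoidAlgebra.ext ha⟩

lemma card_ker_mapDomainRingHom_mul {R M N : Type*} [Ring R] [Monoid M] [Monoid N] [Finite M]
    {f : M →* N} (hf : Function.Surjective f) :
    Nat.card (RingHom.ker (MonoidAlgebra.mapDomainRingHom R f)) * Nat.card R ^ Nat.card N =
      Nat.card R ^ Nat.card M := by
  have : Finite N := .of_surjective f hf
  let φ := MonoidAlgebra.mapDomainRingHom R f
  rw [← natCard_monoidAlgebra, ← natCard_monoidAlgebra,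
    Submodule.card_eq_card_quotient_mul_card (RingHom.ker φ),
    Nat.card_congr (φ.quotientKerEquivOfSurjective (mapDomainRingHom_surjective hf)).toEquiv]

end Cardinality

section Frobenius

variable {p : ℕ} [Fact p.Prime]

lemma pow_prime_pow_eq {R M : Type*} [CommSemiring R] [CharP R p] [CommMonoid M] (j : ℕ)
    (a : R[M]) :
    a ^ p ^ j = MonoidAlgebra.mapRingHom M (iterateFrobenius R p j)
      (MonoidAlgebra.mapDomainRingHom R (powMonoidHom (p ^ j)) a) := by
  have : CharP R[M] p := charP_of_injective_algebraMap
    (Function.LeftInverse.injective (augmentation R M).commutes) p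
  suffices iterateFrobenius R[M] p j = (MonoidAlgebra.mapRingHom M (iterateFrobenius R p j)).comp
      (MonoidAlgebra.mapDomainRingHom R (powMonoidHom (p ^ j))) from congr($this a)
  ext x <;> simp [iterateFrobenius_def, MonoidAlgebra.single_pow]

variable {R : Type*} [CommRing R] [IsReduced R] [CharP R p]

section CommMonoid

variable {M : Type*} [CommMonoid M]

lemma pow_prime_pow_eq_one_iff (j : ℕ) (a : R[M]) :
    a ^ p ^ j = 1 ↔ MonoidAlgebra.mapDomainRingHom R (powMonoidHom (p ^ j)) a = 1 := by
  have hinj : Function.Injective (MonoidAlgebra.mapRingHom M (iterateFrobenius R p j)) :=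
    MonoidAlgebra.map_injective _ (iterateFrobenius_inj R p j)
  rw [pow_prime_pow_eq, map_eq_one_iff _ hinj]

lemma card_pow_prime_pow_eq_one [Finite R] [Finite M] (j : ℕ) :
    Nat.card {a : R[M] // a ^ p ^ j = 1} =
      Nat.card R ^ (Nat.card M - Nat.card (MonoidHom.mrange (powMonoidHom (p ^ j) : M →* M))) := by
  set π : M →* M := powMonoidHom (p ^ j) with hπ
  let ι := MonoidAlgebra.mapDomainRingHom R (MonoidHom.mrange π).subtype
  let φ := MonoidAlgebra.mapDomainRingHom R π.mrangeRestrict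
  have hι : Function.Injective ι := MonoidAlgebra.mapDomain_injective Subtype.val_injective
  have factor : MonoidAlgebra.mapDomainRingHom R π = ι.comp φ :=
    MonoidAlgebra.mapDomainRingHom_comp (MonoidHom.mrange π).subtype π.mrangeRestrict
  have pow_eq_one_iff (a : R[M]) : a ^ p ^ j = 1 ↔ a - 1 ∈ RingHom.ker φ := by
    rw [pow_prime_pow_eq_one_iff, ← hπ, factor, RingHom.comp_apply, map_eq_one_iff _ hι,
      RingHom.sub_mem_ker_iff, map_one]
  have card_mrange_le : Nat.card (MonoidHom.mrange π) ≤ Nat.card M :=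
    Nat.card_le_card_of_injective _ Subtype.val_injective
  rw [Nat.card_congr ((Equiv.subRight 1).subtypeEquiv pow_eq_one_iff)]
  have card_range_pos : 0 < Nat.card R ^ Nat.card (MonoidHom.mrange π) := pow_pos Nat.card_pos _
  refine Nat.eq_of_mul_eq_mul_right card_range_pos ?_
  rw [card_ker_mapDomainRingHom_mul π.mrangeRestrict_surjective, ← pow_add,
    Nat.sub_add_cancel card_mrange_le]

lemma torsionCard_normalizedUnits_eq_card_pow_eq_one (j : ℕ) :
    torsionCard (normalizedUnits R M) (p ^ j) = Nat.card {a : R[M] // a ^ p ^ j = 1} := by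
  have hpj : p ^ j ≠ 0 := pow_ne_zero j (Fact.out : p.Prime).ne_zero
  have augmentation_eq_one {a : R[M]} (ha : a ^ p ^ j = 1) : augmentation R M a = 1 := by
    apply iterateFrobenius_inj R p j
    simp [iterateFrobenius_def, ← map_pow, ha]
  exact Nat.card_congr
    { toFun v := ⟨v.1.1.val, by
        have hv := MonoidHom.mem_ker.mp v.2
        simpa using congrArg (fun u : normalizedUnits R M => (u.1 : R[M])) hv⟩
      invFun a := ⟨⟨Units.ofPowEqOne a.1 _ a.2 hpj,
        mem_normalizedUnits.mpr (augmentation_eq_one a.2)⟩, by ext; simp⟩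
      left_inv v := by ext; rfl
      right_inv a := rfl }

end CommMonoid

section PGroup

variable {G : Type*} [CommGroup G] [Finite G]

lemma isPGroup_normalizedUnits (hG : IsPGroup p G) : IsPGroup p (normalizedUnits R G) := by
  obtain ⟨N, hN⟩ := IsPGroup.iff_card.mp hG
  have pow_eq_one : (powMonoidHom (p ^ N) : G →* G) = 1 := by
    ext g
    simp [← hN]
  intro u
  have hu : (u.1 : R[G]) ^ p ^ N = 1 := by
    rw [pow_prime_pow_eq_one_iff, pow_eq_one, mapDomainRingHom_one, mem_normalizedUnits.mp u.2,
      map_one]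
  exact ⟨N, Subtype.ext (Units.ext hu)⟩

theorem torsionCard_normalizedUnits [Finite R] (j : ℕ) :
    torsionCard (normalizedUnits R G) (p ^ j) =
      Nat.card R ^ (Nat.card G - Nat.card G / torsionCard G (p ^ j)) := by
  rw [torsionCard_normalizedUnits_eq_card_pow_eq_one, card_pow_prime_pow_eq_one,
    ← card_range_powMonoidHom]
  rfl

theorem nonempty_units_mulEquiv_prod_units [Finite R] (hG : IsPGroup p G)
    {B : Type*} [CommGroup B] [Finite B] (hB : IsPGroup p B)
    (h : ∀ j, torsionCard B (p ^ j) =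
      Nat.card R ^ (Nat.card G - Nat.card G / torsionCard G (p ^ j))) :
    Nonempty (R[G]ˣ ≃* B × Rˣ) := by
  obtain ⟨φ⟩ := nonempty_mulEquiv_of_torsionCard_eq
    (isPGroup_normalizedUnits (R := R) hG) hB fun j => by rw [torsionCard_normalizedUnits, h]
  exact ⟨(unitsEquivNormalizedUnitsProd R G).trans (φ.prodCongr (.refl _))⟩

end PGroup

end Frobenius

lemma nonempty_units_mulEquiv_cyclic (F : Type*) [Field F] [Finite F] :
    Nonempty (Fˣ ≃* C (Nat.card F - 1)) := by
  rw [← Nat.card_units]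
  exact ⟨(zmodCyclicMulEquiv inferInstance).symm⟩

lemma torsionCard_prod_cyclic_eight_four_two (n j : ℕ) :
    torsionCard ((Fin n → C 8) × (Fin n → C 4) × (Fin (26 * n) → C 2)) (2 ^ j) =
      (2 ^ n) ^ (32 - 32 / torsionCard (C 8 × C 2 × C 2) (2 ^ j)) := by
  have gcd_identity : Nat.gcd 8 (2 ^ j) * Nat.gcd 4 (2 ^ j) * Nat.gcd 2 (2 ^ j) ^ 26 =
      2 ^ (32 - 32 / (Nat.gcd 8 (2 ^ j) * (Nat.gcd 2 (2 ^ j) * Nat.gcd 2 (2 ^ j)))) := by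
    rcases lt_or_ge j 3 with hj | hj
    · interval_cases j <;> norm_num
    · have eight_dvd : 8 ∣ 2 ^ j := pow_dvd_pow 2 hj
      rw [Nat.gcd_eq_left eight_dvd, Nat.gcd_eq_left (dvd_trans (by norm_num) eight_dvd),
        Nat.gcd_eq_left (dvd_trans (by norm_num) eight_dvd)]
      norm_num
  simp only [torsionCard_prod, torsionCard_pi, torsionCard_cyclic, prod_const, card_univ,
    Fintype.card_fin]
  rw [pow_right_comm, ← gcd_identity, mul_pow, mul_pow, ← pow_mul, mul_assoc]

theorem unit_group_stmt_6 (F : Type*) [Field F] [Fintype F] [CharP F 2]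
    (n : ℕ) (hn : 0 < n) (hF : Fintype.card F = 2 ^ n) :
    Nonempty ((MonoidAlgebra F (C 8 × C 2 × C 2))ˣ ≃*
      ((Fin (n) → C 8) × (Fin (n) → C 4) × (Fin (26 * n) → C 2) × C (2 ^ n - 1))) := by
  have card_F : Nat.card F = 2 ^ n := by rw [Nat.card_eq_fintype_card, hF]
  have isPGroup_G : IsPGroup 2 (C 8 × C 2 × C 2) := .of_card (n := 5) (by simp)
  have isPGroup_B : IsPGroup 2 ((Fin n → C 8) × (Fin n → C 4) × (Fin (26 * n) → C 2)) :=
    .of_card (n := 3 * n + (2 * n + 26 * n)) (by simp [pow_add, pow_mul])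
  obtain ⟨φ⟩ := nonempty_units_mulEquiv_prod_units (R := F) isPGroup_G isPGroup_B fun j => by
    rw [torsionCard_prod_cyclic_eight_four_two, card_F]
    simp
  obtain ⟨ψ⟩ := nonempty_units_mulEquiv_cyclic F
  rw [card_F] at ψ
  exact ⟨(φ.trans (.prodCongr (.refl _) ψ)).trans
    (MulEquiv.prodAssoc.trans (.prodCongr (.refl _) MulEquiv.prodAssoc))⟩
end
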